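/- Let ν be a probability measure on S² with bounded density with respect to σ, and suppose μ = ν − σ has finite logarithmic energy I(μ) = ∫∫ log(1/|x−y|) dμ(x)dμ(y). Then for every function f : S² → ℝ that is 1-Lipschitz with respect to the geodesic distance, ( ∫_{S²} f dν − ∫_{S²} f dσ )² ≤ 2·I(μ). -/

import Mathlib

open MeasureTheory Real Filter Set

noncomputable section

/-- Euclidean 3-space. -/
abbrev E3 : Type := EuclideanSpace ℝ (Fin 3)

/-- The unit sphere `S²` = {x ∈ ℝ³ : |x| = 1}. -/
abbrev S2 : Type := Metric.sphere (0 : E3) 1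

/-- Surface measure on `S²`. -/
noncomputable def surf : Measure S2 := (volume : Measure E3).toSphere

/-- The normalized surface (uniform probability) measure `σ` on `S²`. -/
noncomputable def sigma2 : Measure S2 := (surf Set.univ)⁻¹ • surf

instance : IsFiniteMeasure sigma2 := by
  constructor
  rw [sigma2]
  simp only [Measure.smul_apply, smul_eq_mul]
  exact lt_of_le_of_lt (ENNReal.inv_mul_le_one _) ENNReal.one_lt_top

/-- The geodesic (great-circle) distance on `S²`. -/
noncomputable def dg (x y : S2) : ℝ := Real.arccos (inner (𝕜 := ℝ) (x : E3) (y : E3))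

/-- The spherical cap `B(x,a) = {y ∈ S² : d_g(x,y) ≤ a}`. -/
def cap (x : S2) (a : ℝ) : Set S2 := {y | dg x y ≤ a}

/-- The normalized restriction `σ(B)⁻¹ · χ_B · σ` of `σ` to a set `B ⊆ S²`. -/
noncomputable def capUniform (B : Set S2) : Measure S2 := (sigma2 B)⁻¹ • sigma2.restrict B

instance (B : Set S2) : IsFiniteMeasure (capUniform B) := by
  constructor
  rw [capUniform]
  simp only [Measure.smul_apply, smul_eq_mul, Measure.restrict_apply_univ]
  exact lt_of_le_of_lt (ENNReal.inv_mul_le_one _) ENNReal.one_lt_top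

/-- The logarithmic kernel `G(x,y) = log (1/|x-y|)`. -/
noncomputable def G (x y : S2) : ℝ := Real.log (1 / dist x y)

/-- The logarithmic energy `I(μ) = ∬ G dμ dμ` of a finite signed measure `μ`, computed
via its Jordan decomposition `μ = μ⁺ - μ⁻`:
`I(μ) = ∬ G dμ⁺dμ⁺ - ∬ G dμ⁺dμ⁻ - ∬ G dμ⁻dμ⁺ + ∬ G dμ⁻dμ⁻`. -/
noncomputable def signedLogEnergy (μ : SignedMeasure S2) : ℝ :=
  (∫ x, ∫ y, G x y ∂μ.toJordanDecomposition.posPart ∂μ.toJordanDecomposition.posPart)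
  - (∫ x, ∫ y, G x y ∂μ.toJordanDecomposition.negPart ∂μ.toJordanDecomposition.posPart)
  - (∫ x, ∫ y, G x y ∂μ.toJordanDecomposition.posPart ∂μ.toJordanDecomposition.negPart)
  + (∫ x, ∫ y, G x y ∂μ.toJordanDecomposition.negPart ∂μ.toJordanDecomposition.negPart)


open scoped InnerProductSpace

lemma surf_ne_zero : surf Set.univ ≠ 0 := by
  rw [surf, Ne, Measure.measure_univ_eq_zero]
  exact Measure.toSphere_ne_zero _

instance : IsFiniteMeasure surf := by unfold surf; infer_instance

instance sigma2_prob : IsProbabilityMeasure sigma2 := by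
  constructor
  rw [sigma2, Measure.smul_apply, smul_eq_mul]
  exact ENNReal.inv_mul_cancel surf_ne_zero (measure_ne_top _ _)

/-- The action of a linear isometry on the sphere. -/
def rotS (U : E3 ≃ₗᵢ[ℝ] E3) (y : S2) : S2 := ⟨U y, by simp⟩

lemma continuous_rotS (U : E3 ≃ₗᵢ[ℝ] E3) : Continuous (rotS U) := by
  unfold rotS; fun_prop

lemma surf_map (U : E3 ≃ₗᵢ[ℝ] E3) : surf.map (rotS U) = surf := by
  ext s hs
  have hm := (continuous_rotS U).measurable
  rw [Measure.map_apply hm hs, surf, Measure.toSphere_apply' _ hs, Measure.toSphere_apply' _ (hm hs)]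
  congr 1
  refine Eq.trans ?_ ((LinearIsometryEquiv.measurePreserving U).measure_preimage_emb
    U.toHomeomorph.measurableEmbedding _)
  congr 1
  ext z
  simp only [Set.mem_smul, Set.mem_image, Set.mem_preimage, Subtype.exists]
  constructor
  · rintro ⟨r, hr, w, ⟨y, hy, hys, rfl⟩, rfl⟩
    exact ⟨r, hr, U y, ⟨U y, by simpa using hy, hys, rfl⟩, by simp⟩
  · rintro ⟨r, hr, w, ⟨y, hy, hys, rfl⟩, h⟩
    refine ⟨r, hr, U.symm y, ⟨U.symm y, by simpa using hy, ?_, rfl⟩, ?_⟩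
    · simpa [rotS] using hys
    · apply U.injective; simp [h]

lemma sigma2_map (U : E3 ≃ₗᵢ[ℝ] E3) : sigma2.map (rotS U) = sigma2 := by
  rw [sigma2, Measure.map_smul, surf_map]

lemma integral_rotS (U : E3 ≃ₗᵢ[ℝ] E3) (H : S2 → ℝ) (hH : Continuous H) :
    ∫ y, H (rotS U y) ∂sigma2 = ∫ y, H y ∂sigma2 := by
  conv_rhs => rw [← sigma2_map U]
  rw [integral_map (continuous_rotS U).aemeasurable hH.aestronglyMeasurable]

lemma integrable_of_cont {H : S2 → ℝ} (hH : Continuous H) : Integrable H sigma2 :=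
  hH.integrable_of_hasCompactSupport (HasCompactSupport.of_compactSpace _)

/-- Infinitesimal rotation invariance. -/
lemma integral_skew (A : E3 →L[ℝ] E3) (hA : ∀ v w, ⟪A v, w⟫_ℝ = - ⟪v, A w⟫_ℝ)
    (H : E3 → ℝ) (H' : E3 → E3 →L[ℝ] ℝ)
    (hd : ∀ y : S2, HasFDerivAt H (H' y) y) (hc : Continuous fun y : S2 => H' y) :
    ∫ y : S2, H' y (A y) ∂sigma2 = 0 := by
  have hskew : ∀ t : ℝ, t • A ∈ skewAdjoint (E3 →L[ℝ] E3) := by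
    intro t
    rw [skewAdjoint.mem_iff]
    ext1 v
    refine ext_inner_right ℝ fun w => ?_
    rw [ContinuousLinearMap.star_eq_adjoint, ContinuousLinearMap.adjoint_inner_left]
    simp [inner_smul_left, inner_smul_right, hA]
  let +nondep : NormedAlgebra ℚ (E3 →L[ℝ] E3) := NormedAlgebra.restrictScalars ℚ ℝ _
  have hun : ∀ t : ℝ, NormedSpace.exp (t • A) ∈ unitary (E3 →L[ℝ] E3) := fun t =>
    NormedSpace.exp_mem_unitary_of_mem_skewAdjoint (hskew t)
  let U : ℝ → (E3 ≃ₗᵢ[ℝ] E3) := fun t => Unitary.linearIsometryEquiv ⟨_, hun t⟩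
  have hU : ∀ t v, U t v = NormedSpace.exp (t • A) v := fun t v => rfl
  have hHc : Continuous fun y : S2 => H y := by
    rw [continuous_iff_continuousAt]
    intro y
    exact ContinuousAt.comp (f := fun y : S2 => (y:E3)) (hd y).continuousAt continuous_subtype_val.continuousAt
  have hUd : ∀ t v, HasDerivAt (fun t => U t v) (A (U t v)) t := by
    intro t v
    have h := hasDerivAt_exp_smul_const' (𝕂 := ℝ) A t
    have h2 := h.clm_apply (hasDerivAt_const t v)
    simp only [map_zero, add_zero] at h2
    exact h2
  obtain ⟨B, hB⟩ : ∃ B, ∀ y : S2, ‖H' y‖ ≤ B := by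
    obtain ⟨B, hB⟩ := (isCompact_range hc).isBounded.exists_norm_le
    exact ⟨B, fun y => hB _ ⟨y, rfl⟩⟩
  have key := hasDerivAt_integral_of_dominated_loc_of_deriv_le (μ := sigma2) (𝕜 := ℝ)
    (F := fun t (y : S2) => H (rotS (U t) y)) (F' := fun t (y : S2) => H' (rotS (U t) y) (A (rotS (U t) y)))
    (x₀ := 0) (s := Set.univ) (bound := fun _ => B * ‖A‖) Filter.univ_mem
    (Eventually.of_forall fun t => (hHc.comp (continuous_rotS (U t))).aestronglyMeasurable)
    (integrable_of_cont (hHc.comp (continuous_rotS (U 0))))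
    (by
      apply Continuous.aestronglyMeasurable
      have h1 := hc.comp (continuous_rotS (U 0))
      have h2 : Continuous fun y => A (rotS (U 0) y) := A.continuous.comp
        (continuous_subtype_val.comp (continuous_rotS (U 0)))
      exact h1.clm_apply h2)
    (Eventually.of_forall fun y t _ => by
      refine ((H' _).le_opNorm _).trans ?_
      have h1 : ‖A (rotS (U t) y)‖ ≤ ‖A‖ := by
        simpa using A.le_opNorm (rotS (U t) y : E3)
      exact mul_le_mul (hB _) h1 (norm_nonneg _) ((norm_nonneg _).trans (hB y)))
    (integrable_const _)
    (Eventually.of_forall fun y t _ => by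
      exact (hd (rotS (U t) y)).comp_hasDerivAt t (hUd t y))
  have h2 := key.2
  have h3 : (fun t => ∫ y, H (rotS (U t) y) ∂sigma2) = fun _ => ∫ y : S2, H y ∂sigma2 := by
    ext t; exact integral_rotS (U t) (fun y => H y) hHc
  rw [h3] at h2
  have h4 := h2.unique (hasDerivAt_const _ _)
  have e0 : NormedSpace.exp ((0:ℝ) • A) = 1 := by
    rw [show (0:ℝ) • A = 0 from zero_smul ℝ A]; exact NormedSpace.exp_zero
  have h5 : ∀ y, rotS (U 0) y = y := by
    intro y; apply Subtype.ext; simp only [rotS, hU]; rw [e0]; rfl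
  simpa [h5] using h4

lemma inner_mem (x y : S2) : ⟪(x:E3), (y:E3)⟫_ℝ ∈ Set.Icc (-1:ℝ) 1 := by
  have h := abs_real_inner_le_norm (x:E3) (y:E3)
  simp only [norm_eq_of_mem_sphere, mul_one] at h
  exact abs_le.1 h

lemma sphere_sum (y : S2) : ∑ j, (y : E3) j * (y:E3) j = 1 := by
  have h := real_inner_self_eq_norm_sq (y:E3)
  rw [PiLp.inner_apply] at h
  simpa [pow_two] using h

lemma inner_eq_sum3 (x y : E3) : ⟪x, y⟫_ℝ = ∑ j, x j * y j := by
  rw [PiLp.inner_apply]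
  simp [mul_comm]

/-- Green formula on the sphere for a zonal vector field. -/
lemma green (x : S2) (ψ ψ' : ℝ → ℝ) (hψ : ∀ t ∈ Set.Icc (-1:ℝ) 1, HasDerivAt ψ (ψ' t) t)
    (hψ' : ContinuousOn ψ' (Set.Icc (-1:ℝ) 1))
    (F : E3 → ℝ) (F' : E3 → E3 →L[ℝ] ℝ)
    (hd : ∀ y : S2, HasFDerivAt F (F' y) y) (hc : Continuous fun y : S2 => F' y) :
    ∫ y : S2, (ψ ⟪(x:E3), (y:E3)⟫_ℝ * F' y ((x:E3) - ⟪(x:E3), (y:E3)⟫_ℝ • (y:E3))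
      + F y * ((1 - ⟪(x:E3), (y:E3)⟫_ℝ ^ 2) * ψ' ⟪(x:E3), (y:E3)⟫_ℝ
        - 2 * ⟪(x:E3), (y:E3)⟫_ℝ * ψ ⟪(x:E3), (y:E3)⟫_ℝ)) ∂sigma2 = 0 := by
  have hFc : Continuous fun y : S2 => F y := by
    rw [continuous_iff_continuousAt]
    intro y
    exact ContinuousAt.comp (f := fun y : S2 => (y:E3)) (hd y).continuousAt
      continuous_subtype_val.continuousAt
  have hin : Continuous fun y : S2 => ⟪(x:E3), (y:E3)⟫_ℝ := by fun_prop
  have hψc : Continuous fun y : S2 => ψ ⟪(x:E3), (y:E3)⟫_ℝ := by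
    rw [continuous_iff_continuousAt]
    intro y
    exact ContinuousAt.comp (f := fun y : S2 => ⟪(x:E3), (y:E3)⟫_ℝ)
      (hψ _ (inner_mem x y)).continuousAt hin.continuousAt
  have hψ'c : Continuous fun y : S2 => ψ' ⟪(x:E3), (y:E3)⟫_ℝ :=
    hψ'.comp_continuous hin (inner_mem x)
  let A : Fin 3 → E3 →L[ℝ] E3 := fun j =>
    (EuclideanSpace.proj (𝕜 := ℝ) j).smulRight (x:E3) -
      (innerSL ℝ (x:E3)).smulRight (EuclideanSpace.single j (1:ℝ))
  have hAap : ∀ j v, A j v = v j • (x:E3) - ⟪(x:E3), v⟫_ℝ • EuclideanSpace.single j (1:ℝ) := by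
    intro j v; simp [A]
  let H' : Fin 3 → E3 → E3 →L[ℝ] ℝ := fun j y =>
    F y • (ψ ⟪(x:E3), y⟫_ℝ • (EuclideanSpace.proj (𝕜 := ℝ) j : E3 →L[ℝ] ℝ)
      + y j • (ψ' ⟪(x:E3), y⟫_ℝ • innerSL ℝ (x:E3))) + (ψ ⟪(x:E3), y⟫_ℝ * y j) • F' y
  have hHd : ∀ j, ∀ y : S2, HasFDerivAt (fun y => F y * (ψ ⟪(x:E3), y⟫_ℝ * y j)) (H' j y) y := by
    intro j y
    have h1 : HasFDerivAt (fun y : E3 => ψ ⟪(x:E3), y⟫_ℝ) (ψ' ⟪(x:E3), (y:E3)⟫_ℝ • innerSL ℝ (x:E3)) (y:E3) := by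
      have := (hψ _ (inner_mem x y)).comp_hasFDerivAt (y:E3) (innerSL ℝ (x:E3)).hasFDerivAt
      exact this
    have h2 : HasFDerivAt (fun y : E3 => y j) (EuclideanSpace.proj (𝕜 := ℝ) j : E3 →L[ℝ] ℝ) (y:E3) :=
      (EuclideanSpace.proj (𝕜 := ℝ) j : E3 →L[ℝ] ℝ).hasFDerivAt
    exact (hd y).mul (h1.mul h2)
  have hHc : ∀ j, Continuous fun y : S2 => H' j y := by
    intro j
    have h3 : Continuous fun y : S2 => (y:E3) j := by fun_prop
    exact (hFc.smul ((hψc.smul continuous_const).add (h3.smul (hψ'c.smul continuous_const)))).add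
      ((hψc.mul h3).smul hc)
  have hIntg : ∀ j, Integrable (fun y : S2 => H' j y (A j y)) sigma2 := by
    intro j
    apply integrable_of_cont
    exact (hHc j).clm_apply ((A j).continuous.comp continuous_subtype_val)
  have hz : ∀ j, ∫ y : S2, H' j y (A j y) ∂sigma2 = 0 := by
    intro j
    apply integral_skew (A j) _ _ (H' j) (hHd j) (hHc j)
    intro v w
    simp only [hAap, inner_sub_left, inner_sub_right, inner_smul_left, inner_smul_right,
      EuclideanSpace.inner_single_left, EuclideanSpace.inner_single_right]
    simp [real_inner_comm]
    rw [real_inner_comm (x:E3) v, real_inner_comm (x:E3) w]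
    ring
  have hs := integral_finsetSum Finset.univ (fun j _ => hIntg j)
  rw [Finset.sum_eq_zero (fun j _ => hz j)] at hs
  rw [← hs]
  congr 1
  ext y
  have e1 := sphere_sum y
  have e2 := inner_eq_sum3 (x:E3) (y:E3)
  have e3 := sphere_sum x
  have e4 : F' y (x - ⟪(x:E3), (y:E3)⟫_ℝ • (y:E3)) = ∑ j, (y:E3) j * F' y (A j y) := by
    have : (x:E3) - ⟪(x:E3), (y:E3)⟫_ℝ • (y:E3) = ∑ j, (y:E3) j • A j y := by
      ext i
      simp only [hAap, smul_sub, Finset.sum_sub_distrib, smul_smul, ← Finset.sum_smul, e1]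
      fin_cases i <;> simp [Fin.sum_univ_three, mul_comm]
    rw [this, map_sum]
    simp
  have e5 : ∀ j, ⟪(x:E3), A j y⟫_ℝ = (y:E3) j - ⟪(x:E3), (y:E3)⟫_ℝ * (x:E3) j := by
    intro j
    rw [hAap, inner_sub_right, inner_smul_right, inner_smul_right, EuclideanSpace.inner_single_right]
    simp
  have e6 : ∀ j, (EuclideanSpace.proj (𝕜 := ℝ) j : E3 →L[ℝ] ℝ) (A j y) = (y:E3) j * (x:E3) j - ⟪(x:E3), (y:E3)⟫_ℝ := by
    intro j
    rw [hAap]; simp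
  rw [e4]
  simp only [H', _root_.add_apply, _root_.smul_apply, smul_eq_mul,
    innerSL_apply_apply, e5, e6]
  generalize hT : ⟪(x:E3), (y:E3)⟫_ℝ = t at *
  simp only [Fin.sum_univ_three] at *
  linear_combination (-F y * ψ' t) * e1 + (F y * ψ t - F y * ψ' t * t) * e2

/-- Inner product on the sphere. -/
def tt (x y : S2) : ℝ := ⟪(x:E3), (y:E3)⟫_ℝ

/-- Regularized delta kernel. -/
def pk (δ : ℝ) (x y : S2) : ℝ := (2 * δ + δ ^ 2) / (1 + δ - tt x y) ^ 2

/-- Regularized (doubled) logarithmic kernel. -/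
def hk (δ : ℝ) (x y : S2) : ℝ := - Real.log (2 * (1 + δ - tt x y))

/-- Regularized gradient kernel. -/
def Vk (δ : ℝ) (x y : S2) : E3 := (1 + δ - tt x y)⁻¹ • ((x:E3) - tt x y • (y:E3))

lemma tt_comm (x y : S2) : tt x y = tt y x := real_inner_comm _ _

lemma tt_le (x y : S2) : tt x y ≤ 1 := (inner_mem x y).2
lemma le_tt (x y : S2) : -1 ≤ tt x y := (inner_mem x y).1

lemma pk_comm (δ : ℝ) (x y : S2) : pk δ x y = pk δ y x := by rw [pk, pk, tt_comm]
lemma hk_comm (δ : ℝ) (x y : S2) : hk δ x y = hk δ y x := by rw [hk, hk, tt_comm]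

lemma continuous_tt : Continuous fun p : S2 × S2 => tt p.1 p.2 := by unfold tt; fun_prop

lemma den_pos {δ : ℝ} (hδ : 0 < δ) (x y : S2) : 0 < 1 + δ - tt x y := by
  have := tt_le x y; linarith

lemma pk_nonneg {δ : ℝ} (hδ : 0 < δ) (x y : S2) : 0 ≤ pk δ x y := by
  unfold pk; positivity

lemma continuous_pk {δ : ℝ} (hδ : 0 < δ) : Continuous fun p : S2 × S2 => pk δ p.1 p.2 := by
  unfold pk
  exact continuous_const.div ((continuous_const.sub continuous_tt).pow 2)
    (fun p => (pow_pos (den_pos hδ _ _) 2).ne')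

lemma continuous_hk {δ : ℝ} (hδ : 0 < δ) : Continuous fun p : S2 × S2 => hk δ p.1 p.2 := by
  unfold hk
  exact ((continuous_const.mul (continuous_const.sub continuous_tt)).log
    (fun p => (mul_pos two_pos (den_pos hδ _ _)).ne')).neg

lemma continuous_Vk {δ : ℝ} (hδ : 0 < δ) : Continuous fun p : S2 × S2 => Vk δ p.1 p.2 := by
  unfold Vk
  refine ((continuous_const.sub continuous_tt).inv₀ (fun p => (den_pos hδ _ _).ne')).smul ?_
  exact (continuous_subtype_val.comp continuous_fst).sub
    (continuous_tt.smul (continuous_subtype_val.comp continuous_snd))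

lemma cont_right {β : Type*} [TopologicalSpace β] {K : S2 → S2 → β}
    (h : Continuous fun p : S2 × S2 => K p.1 p.2) (x : S2) : Continuous (K x) :=
  h.comp (by fun_prop : Continuous fun y : S2 => (x, y))

lemma cont_left {β : Type*} [TopologicalSpace β] {K : S2 → S2 → β}
    (h : Continuous fun p : S2 × S2 => K p.1 p.2) (y : S2) : Continuous (fun x => K x y) :=
  h.comp (by fun_prop : Continuous fun x : S2 => (x, y))

lemma continuous_den (δ : ℝ) (x : S2) : Continuous fun y : S2 => 1 + δ - tt x y := by
  have := cont_right continuous_tt x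
  fun_prop

lemma green_pk {δ : ℝ} (hδ : 0 < δ) (x : S2) (F : E3 → ℝ) (F' : E3 → E3 →L[ℝ] ℝ)
    (hd : ∀ y : S2, HasFDerivAt F (F' y) y) (hc : Continuous fun y : S2 => F' y) :
    ∫ y : S2, F' y (Vk δ x y) ∂sigma2 = ∫ y : S2, F y * (pk δ x y - 1) ∂sigma2 := by
  have hFc : Continuous fun y : S2 => F y := by
    rw [continuous_iff_continuousAt]
    intro y
    exact ContinuousAt.comp (f := fun y : S2 => (y:E3)) (hd y).continuousAt
      continuous_subtype_val.continuousAt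
  have h := green x (fun t => (1 + δ - t)⁻¹) (fun t => ((1 + δ - t) ^ 2)⁻¹) (by
      intro t ht
      have h1 : HasDerivAt (fun t : ℝ => 1 + δ - t) (-1) t := (hasDerivAt_id t).const_sub _
      have h2 := h1.fun_inv (by linarith [ht.2] : (1 + δ - t) ≠ 0)
      exact h2.congr_deriv (by simp)) (by
      apply ContinuousOn.inv₀ (by fun_prop)
      intro t ht
      exact (pow_pos (by linarith [ht.2]) 2).ne') F F' hd hc
  rw [← sub_eq_zero, ← integral_sub, ← h]
  · congr 1
    ext y
    have hp := den_pos hδ x y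
    simp only [Vk, pk, map_smul, smul_eq_mul]
    change _ = (1 + δ - tt x y)⁻¹ * (F' y) ((x:E3) - tt x y • (y:E3)) + F y * ((1 - tt x y ^ 2) *
      ((1 + δ - tt x y) ^ 2)⁻¹ - 2 * tt x y * (1 + δ - tt x y)⁻¹)
    field_simp
    ring
  · exact integrable_of_cont (hc.clm_apply (cont_right (continuous_Vk hδ) x))
  · exact integrable_of_cont (hFc.mul ((cont_right (continuous_pk hδ) x).sub continuous_const))

lemma integral_pk {δ : ℝ} (hδ : 0 < δ) (x : S2) : ∫ y, pk δ x y ∂sigma2 = 1 := by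
  have h := green_pk hδ x (fun _ => 1) (fun _ => 0) (fun y => hasFDerivAt_const _ _) continuous_const
  simp only [_root_.zero_apply, integral_zero, one_mul] at h
  rw [integral_sub (integrable_of_cont (cont_right (continuous_pk hδ) x)) (integrable_const _)] at h
  simp at h
  linarith

lemma integral_VV {δ : ℝ} (hδ : 0 < δ) (x x' : S2) :
    ∫ y, ⟪Vk δ x y, Vk δ x' y⟫_ℝ ∂sigma2 = ∫ y, hk δ x' y * (pk δ x y - 1) ∂sigma2 := by
  have h := green_pk hδ x (fun y => - Real.log (2 * (1 + δ - ⟪(x':E3), y⟫_ℝ)))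
    (fun y => (1 + δ - ⟪(x':E3), y⟫_ℝ)⁻¹ • innerSL ℝ (x':E3)) (by
      intro y
      have h1 : HasFDerivAt (fun y : E3 => 2 * (1 + δ - ⟪(x':E3), y⟫_ℝ))
        ((2:ℝ) • (-(innerSL ℝ (x':E3)))) (y:E3) :=
        ((innerSL ℝ (x':E3)).hasFDerivAt.const_sub (1 + δ)).const_mul 2
      have hp := den_pos hδ x' y
      have h2 := (h1.log (mul_pos two_pos hp).ne').neg
      refine h2.congr_fderiv ?_
      unfold tt at hp
      ext v
      simp only [_root_.smul_apply, _root_.neg_apply, innerSL_apply_apply, smul_eq_mul]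
      field_simp) (by
      refine ((continuous_den δ x').inv₀ ?_).smul continuous_const
      intro y; exact (den_pos hδ x' y).ne')
  refine Eq.trans ?_ h
  congr 1
  ext y
  have hyy : ⟪(y:E3), (y:E3)⟫_ℝ = 1 := by simp
  simp only [Vk, _root_.smul_apply, innerSL_apply_apply, inner_smul_left, inner_smul_right, inner_sub_left,
    inner_sub_right, smul_eq_mul, hyy]
  change _ = (1 + δ - tt x' y)⁻¹ * ((1 + δ - tt x y)⁻¹ * (⟪(x':E3), (x:E3)⟫_ℝ - tt x y * tt x' y))
  rw [real_inner_comm (x':E3) (x:E3)]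
  rw [show ⟪(x:E3), (y:E3)⟫_ℝ = tt x y from rfl, show ⟪(y:E3), (x':E3)⟫_ℝ = tt x' y from tt_comm _ _]
  simp

lemma integral_hk_le {δ : ℝ} (hδ : 0 < δ) (x : S2) : ∫ y, hk δ x y ∂sigma2 ≤ 3 := by
  have h := green x (fun t => Real.log (1 + δ - t) + 1) (fun t => -(1 + δ - t)⁻¹) (by
      intro t ht
      have h1 : HasDerivAt (fun t : ℝ => 1 + δ - t) (-1) t := (hasDerivAt_id t).const_sub _
      have h2 := (h1.log (by linarith [ht.2] : (1 + δ - t) ≠ 0)).add_const (1:ℝ)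
      exact h2.congr_deriv (by ring)) (by
      apply ContinuousOn.neg
      apply ContinuousOn.inv₀ (by fun_prop)
      intro t ht
      linarith [ht.2]) (fun _ => 1) (fun _ => 0) (fun y => hasFDerivAt_const _ _) continuous_const
  simp only [_root_.zero_apply, mul_zero, zero_add, one_mul] at h
  have hden : Continuous fun y => 1 + δ - tt x y := continuous_den δ x
  have htc : Continuous fun y => tt x y := cont_right continuous_tt x
  have hlog : Continuous fun y => Real.log (1 + δ - tt x y) := hden.log (fun y => (den_pos hδ x y).ne')
  have hinv : Continuous fun y => (1 + δ - tt x y)⁻¹ := hden.inv₀ (fun y => (den_pos hδ x y).ne')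
  have hmono : ∫ y, (hk δ x y + (-1/2) * ((1 - tt x y ^ 2) * -(1 + δ - tt x y)⁻¹ -
      2 * tt x y * (Real.log (1 + δ - tt x y) + 1))) ∂sigma2 ≤ ∫ y, (3:ℝ) ∂sigma2 := by
    apply integral_mono
    · apply integrable_of_cont
      have := cont_right (continuous_hk hδ) x
      fun_prop
    · exact integrable_const _
    · intro y
      have hp := den_pos hδ x y
      have h1 := tt_le x y
      have h2 := le_tt x y
      have hl2 : 0 ≤ Real.log 2 := Real.log_nonneg (by norm_num)
      simp only [hk]
      rw [Real.log_mul two_ne_zero hp.ne']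
      set t := tt x y
      set d := 1 + δ - t with hd
      have hli := Real.one_sub_inv_le_log_of_pos hp
      have hdi : d * d⁻¹ = 1 := mul_inv_cancel₀ hp.ne'
      have hdp : 0 < d⁻¹ := inv_pos.2 hp
      have hs1 : (1 - t) * d⁻¹ ≤ 1 := by
        rw [← hdi]; exact mul_le_mul_of_nonneg_right (by linarith) hdp.le
      have hs0 : 0 ≤ (1 - t) * d⁻¹ := mul_nonneg (by linarith) hdp.le
      have h3 : (1 - t) * (1 - d⁻¹) ≤ (1 - t) * Real.log d :=
        mul_le_mul_of_nonneg_left hli (by linarith)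
      nlinarith [mul_nonneg (by linarith : 0 ≤ 1 - (1 - t) * d⁻¹) (by linarith : 0 ≤ 1 + t)]
  rw [integral_add, integral_const_mul] at hmono
  · change ∫ y, ((1 - tt x y ^ 2) * -(1 + δ - tt x y)⁻¹ -
      2 * tt x y * (Real.log (1 + δ - tt x y) + 1)) ∂sigma2 = 0 at h
    rw [h] at hmono
    simpa using hmono
  · exact integrable_of_cont (cont_right (continuous_hk hδ) x)
  · apply integrable_of_cont; fun_prop

lemma ae_tt_lt (x : S2) : ∀ᵐ y ∂sigma2, tt x y < 1 := by
  rw [ae_iff]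
  have hset : {y | ¬ tt x y < 1} = {y | tt x y = 1} := by
    ext y; simp only [mem_ofPred_eq, not_lt]
    exact ⟨fun h => le_antisymm (tt_le x y) h, fun h => h.ge⟩
  rw [hset]
  have key : ∀ δ : ℝ, 0 < δ → sigma2.real {y | tt x y = 1} ≤ δ / 2 := by
    intro δ hδ
    have h1 := mul_meas_ge_le_integral_of_nonneg (μ := sigma2) (f := fun y => pk δ x y)
      (Eventually.of_forall fun y => pk_nonneg hδ x y)
      (integrable_of_cont (cont_right (continuous_pk hδ) x)) (2 / δ)
    rw [integral_pk hδ] at h1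
    have h2 : sigma2.real {y | tt x y = 1} ≤ sigma2.real {y | 2 / δ ≤ pk δ x y} := by
      refine measureReal_mono ?_ (measure_ne_top _ _)
      intro y hy
      simp only [mem_ofPred_eq] at hy ⊢
      rw [pk, hy, div_le_div_iff₀ hδ (by ring_nf; positivity)]
      nlinarith [pow_pos hδ 3]
    have h3 := mul_le_mul_of_nonneg_left h2 (by positivity : 0 ≤ 2 / δ)
    have h4 := h3.trans h1
    rw [div_mul_eq_mul_div, div_le_one hδ] at h4
    linarith
  have h0 : sigma2.real {y | tt x y = 1} = 0 := by
    refine le_antisymm (le_of_forall_pos_le_add fun ε hε => ?_) measureReal_nonneg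
    have := key ε hε
    linarith
  rwa [measureReal_eq_zero_iff] at h0

/-- Product measure. -/
abbrev PP : Measure (S2 × S2) := sigma2.prod sigma2

lemma ae_tt_lt_prod : ∀ᵐ p ∂PP, tt p.1 p.2 < 1 := by
  rw [Measure.ae_prod_iff_ae_ae (measurableSet_lt continuous_tt.measurable measurable_const)]
  exact Eventually.of_forall ae_tt_lt

lemma hk_anti {δ η : ℝ} (hδ : 0 ≤ δ) (h : δ ≤ η) {x y : S2} (ht : tt x y < 1) :
    hk η x y ≤ hk δ x y := by
  unfold hk
  apply neg_le_neg
  apply Real.log_le_log <;> linarith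

lemma hk_lower {δ : ℝ} (hδ : 0 < δ) (h1 : δ ≤ 1) (x y : S2) : 0 ≤ hk δ x y + Real.log 6 := by
  unfold hk
  have := le_tt x y
  have h2 := den_pos hδ x y
  have : Real.log (2 * (1 + δ - tt x y)) ≤ Real.log 6 := by
    apply Real.log_le_log <;> linarith
  linarith

lemma measurable_hk (δ : ℝ) : Measurable fun p : S2 × S2 => hk δ p.1 p.2 := by
  unfold hk
  exact (Real.measurable_log.comp ((measurable_const.sub continuous_tt.measurable).const_mul 2)).neg

lemma tendsto_hk {x y : S2} (ht : tt x y < 1) :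
    Tendsto (fun δ => hk δ x y) (nhdsWithin 0 (Set.Ioi 0)) (nhds (hk 0 x y)) := by
  have : ContinuousAt (fun δ => hk δ x y) 0 := by
    unfold hk
    apply ContinuousAt.neg
    apply ContinuousAt.log
    · fun_prop
    · linarith
  exact this.tendsto.mono_left nhdsWithin_le_nhds

lemma integrable_of_cont2 {H : S2 × S2 → ℝ} (hH : Continuous H) : Integrable H PP :=
  hH.integrable_of_hasCompactSupport (HasCompactSupport.of_compactSpace _)

lemma integrable_hk0 : Integrable (fun p : S2 × S2 => hk 0 p.1 p.2) PP := by
  let d : ℕ → ℝ := fun n => 1 / ((n:ℝ) + 1)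
  have hd0 : ∀ n, 0 < d n := fun n => by positivity
  have hd1 : ∀ n, d n ≤ 1 := fun n => by
    simp only [d]; rw [div_le_one (by positivity)]; linarith [(Nat.cast_nonneg n : (0:ℝ) ≤ n)]
  have hdt : Tendsto d atTop (nhdsWithin 0 (Set.Ioi 0)) := by
    rw [tendsto_nhdsWithin_iff]
    exact ⟨tendsto_one_div_add_atTop_nhds_zero_nat, Eventually.of_forall hd0⟩
  have hlim : ∀ᵐ p ∂PP, Tendsto (fun n => hk (d n) p.1 p.2) atTop (nhds (hk 0 p.1 p.2)) := by
    filter_upwards [ae_tt_lt_prod] with p hp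
    exact (tendsto_hk hp).comp hdt
  have hge : ∀ᵐ p ∂PP, 0 ≤ hk 0 p.1 p.2 + Real.log 6 := by
    filter_upwards [hlim] with p hp
    exact ge_of_tendsto' (hp.add_const _) fun n => hk_lower (hd0 n) (hd1 n) _ _
  suffices h : Integrable (fun p : S2 × S2 => hk 0 p.1 p.2 + Real.log 6) PP by
    refine (h.sub (integrable_const (Real.log 6))).congr (Eventually.of_forall fun p => ?_)
    simp
  refine ⟨((measurable_hk 0).add_const _).aestronglyMeasurable, ?_⟩
  rw [hasFiniteIntegral_iff_ofReal hge]
  have hF : ∫⁻ p, ENNReal.ofReal (hk 0 p.1 p.2 + Real.log 6) ∂PP ≤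
      liminf (fun n => ∫⁻ p, ENNReal.ofReal (hk (d n) p.1 p.2 + Real.log 6) ∂PP) atTop := by
    refine le_trans (le_of_eq ?_) (lintegral_liminf_le
      (fun n => ((measurable_hk (d n)).add_const _).ennreal_ofReal))
    apply lintegral_congr_ae
    filter_upwards [hlim] with p hp
    exact ((ENNReal.tendsto_ofReal (hp.add_const _)).liminf_eq).symm
  refine lt_of_le_of_lt (hF.trans ?_) (ENNReal.ofReal_lt_top (r := 3 + Real.log 6))
  refine liminf_le_of_frequently_le' (Frequently.of_forall fun n => ?_)
  rw [← ofReal_integral_eq_lintegral_ofReal (f := fun p : S2 × S2 => hk (d n) p.1 p.2 + Real.log 6)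
    (integrable_of_cont2 ((continuous_hk (hd0 n)).add continuous_const))
    (Eventually.of_forall fun p => hk_lower (hd0 n) (hd1 n) _ _)]
  apply ENNReal.ofReal_le_ofReal
  rw [integral_add (integrable_of_cont2 (continuous_hk (hd0 n))) (integrable_const _)]
  simp only [integral_const, probReal_univ, one_smul, add_le_add_iff_right]
  rw [integral_prod _ (integrable_of_cont2 (continuous_hk (hd0 n)))]
  calc ∫ x, ∫ y, hk (d n) x y ∂sigma2 ∂sigma2 ≤ ∫ x, (3:ℝ) ∂sigma2 := by
        refine integral_mono ?_ (integrable_const _) (fun x => integral_hk_le (hd0 n) x)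
        exact (integrable_of_cont2 (continuous_hk (hd0 n))).integral_prod_left
    _ = 3 := by simp

/-- L¹ distance of the regularized kernel to the limit. -/
def eps1 (δ : ℝ) : ℝ := ∫ p, |hk δ p.1 p.2 - hk 0 p.1 p.2| ∂PP

lemma tendsto_eps1 : Tendsto eps1 (nhdsWithin 0 (Set.Ioi 0)) (nhds 0) := by
  have h : Tendsto eps1 (nhdsWithin 0 (Set.Ioi 0)) (nhds (∫ p : S2 × S2, (0:ℝ) ∂PP)) := by
    refine tendsto_integral_filter_of_dominated_convergence
      (fun p => hk 0 p.1 p.2 - hk 1 p.1 p.2) ?_ ?_ ?_ ?_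
    · exact Eventually.of_forall fun δ =>
        ((measurable_hk δ).sub (measurable_hk 0)).abs.aestronglyMeasurable
    · have : Set.Ioo (0:ℝ) 1 ∈ nhdsWithin (0:ℝ) (Set.Ioi 0) := Ioo_mem_nhdsGT one_pos
      filter_upwards [this] with δ hδ
      filter_upwards [ae_tt_lt_prod] with p hp
      have h1 := hk_anti le_rfl hδ.1.le hp
      have h2 := hk_anti hδ.1.le hδ.2.le hp
      rw [Real.norm_eq_abs, abs_abs, abs_le]
      constructor <;> linarith
    · exact integrable_hk0.sub (integrable_of_cont2 (continuous_hk one_pos))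
    · filter_upwards [ae_tt_lt_prod] with p hp
      have := ((tendsto_hk hp).sub_const (hk 0 p.1 p.2)).abs
      simpa using this
  simpa using h

lemma eps1_nonneg (δ : ℝ) : 0 ≤ eps1 δ := integral_nonneg fun _ => abs_nonneg _

/-- Modulus of concentration of `pk`. -/
def rr (δ : ℝ) (x : S2) : ℝ := ∫ y, Real.sqrt (1 - tt x y) * pk δ x y ∂sigma2

lemma rr_le {δ θ : ℝ} (hδ : 0 < δ) (hθ : 0 < θ) (x : S2) :
    rr δ x ≤ θ + 2 * (2 * δ + δ ^ 2) / θ ^ 4 := by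
  have hpc := cont_right (continuous_pk hδ) x
  have htc : Continuous fun y => tt x y := cont_right continuous_tt x
  have : rr δ x ≤ ∫ y, (θ * pk δ x y + 2 * (2 * δ + δ ^ 2) / θ ^ 4) ∂sigma2 := by
    apply integral_mono
    · apply integrable_of_cont; fun_prop
    · apply integrable_of_cont; fun_prop
    · intro y
      have hp := pk_nonneg hδ x y
      have h1 := tt_le x y
      have h2 := le_tt x y
      simp only
      by_cases hs : 1 - tt x y < θ ^ 2
      · have h3 : Real.sqrt (1 - tt x y) ≤ θ := by
          rw [Real.sqrt_le_left hθ.le]; exact hs.le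
        have h4 := mul_le_mul_of_nonneg_right h3 hp
        have : 0 ≤ 2 * (2 * δ + δ ^ 2) / θ ^ 4 := by positivity
        linarith
      · push Not at hs
        have h3 : Real.sqrt (1 - tt x y) ≤ 2 := by
          rw [Real.sqrt_le_left two_pos.le]; linarith
        have h4 : pk δ x y ≤ (2 * δ + δ ^ 2) / θ ^ 4 := by
          unfold pk
          apply div_le_div_of_nonneg_left (by positivity) (by positivity)
          rw [show θ ^ 4 = (θ ^ 2) ^ 2 by ring]
          apply pow_le_pow_left₀ (by positivity)
          linarith
        have h5 := mul_le_mul h3 h4 hp two_pos.le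
        have : 0 ≤ θ * pk δ x y := by positivity
        rw [mul_div_assoc]
        linarith
  refine this.trans (le_of_eq ?_)
  rw [integral_add (integrable_of_cont (by fun_prop)) (integrable_const _), integral_const_mul,
    integral_pk hδ]
  simp

lemma rr_small {ε : ℝ} (hε : 0 < ε) : ∀ᶠ δ in nhdsWithin (0:ℝ) (Set.Ioi 0), ∀ x, rr δ x ≤ ε := by
  have h : Tendsto (fun δ : ℝ => ε / 2 + 2 * (2 * δ + δ ^ 2) / (ε / 2) ^ 4)
      (nhdsWithin 0 (Set.Ioi 0)) (nhds (ε / 2)) := by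
    have : ContinuousAt (fun δ : ℝ => ε / 2 + 2 * (2 * δ + δ ^ 2) / (ε / 2) ^ 4) 0 := by fun_prop
    have h2 := this.tendsto.mono_left (nhdsWithin_le_nhds (s := Set.Ioi 0))
    simpa using h2
  filter_upwards [h.eventually_le_const (show ε / 2 < ε by linarith), self_mem_nhdsWithin] with δ h1 h2 x
  exact (rr_le h2 (half_pos hε) x).trans h1

lemma conc {δ C : ℝ} (hδ : 0 < δ) {k : S2 → ℝ} (hk : Continuous k) (x : S2)
    (hC : ∀ y, |k y - k x| ≤ C * Real.sqrt (1 - tt x y)) :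
    |∫ y, k y * pk δ x y ∂sigma2 - k x| ≤ C * rr δ x := by
  have hpc := cont_right (continuous_pk hδ) x
  have htc : Continuous fun y => tt x y := cont_right continuous_tt x
  have e : ∫ y, k y * pk δ x y ∂sigma2 - k x = ∫ y, (k y - k x) * pk δ x y ∂sigma2 := by
    simp only [sub_mul]
    rw [integral_sub (integrable_of_cont (by fun_prop)) (integrable_of_cont (by fun_prop)),
      integral_const_mul, integral_pk hδ, mul_one]
  rw [e, rr, ← integral_const_mul]
  refine (abs_integral_le_integral_abs).trans ?_
  apply integral_mono
  · apply integrable_of_cont; fun_prop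
  · apply integrable_of_cont; fun_prop
  · intro y
    simp only
    rw [abs_mul, abs_of_nonneg (pk_nonneg hδ x y), ← mul_assoc]
    exact mul_le_mul_of_nonneg_right (hC y) (pk_nonneg hδ x y)

lemma norm_sub_eq (x y : S2) : ‖(x:E3) - y‖ = Real.sqrt 2 * Real.sqrt (1 - tt x y) := by
  rw [← Real.sqrt_mul two_pos.le, ← Real.sqrt_sq (norm_nonneg _), @norm_sub_sq_real]
  congr 1
  simp [tt]
  ring

lemma cont_int {X : Type*} [TopologicalSpace X] [FirstCountableTopology X] [LocallyCompactSpace X]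
    {K : X → S2 → ℝ} (h : Continuous fun p : X × S2 => K p.1 p.2) :
    Continuous fun x => ∫ y, K x y ∂sigma2 := by
  have := continuous_parametric_integral_of_continuous (μ := sigma2) (f := K) h
    (isCompact_univ (X := S2))
  simpa using this

lemma cont_comp2 {X β : Type*} [TopologicalSpace X] [TopologicalSpace β] {K : S2 → S2 → β}
    (h : Continuous fun p : S2 × S2 => K p.1 p.2) {u v : X → S2} (hu : Continuous u)
    (hv : Continuous v) : Continuous fun q => K (u q) (v q) :=
  Continuous.comp (g := fun p : S2 × S2 => K p.1 p.2) h (hu.prodMk hv)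

/-- The smoothed kernel. -/
def kd (δ : ℝ) (x x' : S2) : ℝ := ∫ y, hk δ x' y * pk δ x y ∂sigma2

lemma cont_kd {δ : ℝ} (hδ : 0 < δ) : Continuous fun p : S2 × S2 => kd δ p.1 p.2 := by
  unfold kd
  apply cont_int (K := fun (p : S2 × S2) y => hk δ p.2 y * pk δ p.1 y)
  exact (cont_comp2 (continuous_hk hδ) continuous_fst.snd continuous_snd).mul
    (cont_comp2 (continuous_pk hδ) continuous_fst.fst continuous_snd)

lemma hk_lip {η : ℝ} (hη : 0 < η) (x' x y : S2) :
    |hk η x' y - hk η x' x| ≤ (Real.sqrt 2 / η) * Real.sqrt (1 - tt x y) := by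
  have key : ∀ a b : S2, hk η x' a - hk η x' b ≤ ‖(a:E3) - b‖ / η := by
    intro a b
    have ha := den_pos hη x' a
    have hb := den_pos hη x' b
    have hb' := tt_le x' a
    unfold hk
    have h1 : Real.log (2 * (1 + η - tt x' b)) - Real.log (2 * (1 + η - tt x' a)) ≤
        (tt x' a - tt x' b) / (1 + η - tt x' a) := by
      rw [← Real.log_div (by positivity) (by positivity), mul_div_mul_left _ _ two_ne_zero]
      refine (Real.log_le_sub_one_of_pos (by positivity)).trans (le_of_eq ?_)
      field_simp
      ring
    have h2 : tt x' a - tt x' b ≤ ‖(a:E3) - b‖ := by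
      have : tt x' a - tt x' b = ⟪(x':E3), (a:E3) - b⟫_ℝ := by rw [inner_sub_right]; rfl
      rw [this]
      refine (real_inner_le_norm _ _).trans ?_
      simp
    have h3 : (tt x' a - tt x' b) / (1 + η - tt x' a) ≤ ‖(a:E3) - b‖ / η :=
      div_le_div₀ (norm_nonneg _) h2 hη (by linarith)
    linarith
  have e : ‖(x:E3) - y‖ / η = (Real.sqrt 2 / η) * Real.sqrt (1 - tt x y) := by
    rw [norm_sub_eq]; ring
  rw [← e, abs_le]
  have h1 := key x y
  have h2 := key y x
  rw [norm_sub_rev] at h2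
  constructor <;> linarith

set_option maxHeartbeats 1000000 in
lemma kd_L1 {δ η ρ : ℝ} (hδ : 0 < δ) (hη : 0 < η) (hρ : ∀ x, rr δ x ≤ ρ) :
    ∫ p, |kd δ p.1 p.2 - hk 0 p.1 p.2| ∂PP ≤
      eps1 δ + 2 * eps1 η + (Real.sqrt 2 / η) * ρ := by
  let q : S2 → S2 → ℝ := fun x y => |hk δ x y - hk η x y|
  have hq : Continuous fun p : S2 × S2 => q p.1 p.2 := ((continuous_hk hδ).sub (continuous_hk hη)).abs
  let a : S2 → S2 → ℝ := fun x x' => ∫ y, q x' y * pk δ x y ∂sigma2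
  have ha : Continuous fun p : S2 × S2 => a p.1 p.2 := by
    apply cont_int (K := fun (p : S2 × S2) y => q p.2 y * pk δ p.1 y)
    exact (cont_comp2 hq continuous_fst.snd continuous_snd).mul
      (cont_comp2 (continuous_pk hδ) continuous_fst.fst continuous_snd)
  have hpt : ∀ x x', |kd δ x x' - hk 0 x x'| ≤ a x x' + (Real.sqrt 2 / η) * ρ
      + |hk η x x' - hk 0 x x'| := by
    intro x x'
    have hp := cont_right (continuous_pk hδ) x
    have hh := cont_right (continuous_hk hδ) x'
    have hh' := cont_right (continuous_hk hη) x'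
    have h1 : |kd δ x x' - ∫ y, hk η x' y * pk δ x y ∂sigma2| ≤ a x x' := by
      rw [kd, ← integral_sub (integrable_of_cont (by fun_prop)) (integrable_of_cont (by fun_prop))]
      refine abs_integral_le_integral_abs.trans (le_of_eq ?_)
      congr 1
      ext y
      rw [← sub_mul, abs_mul, abs_of_nonneg (pk_nonneg hδ x y)]
    have h2 := conc hδ hh' x (fun y => hk_lip hη x' x y)
    have h3 : (Real.sqrt 2 / η) * rr δ x ≤ (Real.sqrt 2 / η) * ρ :=
      mul_le_mul_of_nonneg_left (hρ x) (by positivity)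
    rw [hk_comm η x' x] at h2
    have h4 := abs_add_le (kd δ x x' - ∫ y, hk η x' y * pk δ x y ∂sigma2)
      (∫ y, hk η x' y * pk δ x y ∂sigma2 - hk η x x')
    have h5 := abs_add_le (kd δ x x' - hk η x x') (hk η x x' - hk 0 x x')
    simp only [sub_add_sub_cancel] at h4 h5
    linarith
  have hai : ∫ p, a p.1 p.2 ∂PP = ∫ p, q p.1 p.2 ∂PP := by
    rw [integral_prod _ (integrable_of_cont2 ha), integral_prod_symm _ (integrable_of_cont2 hq)]
    have s1 : ∀ x, ∫ x', a x x' ∂sigma2 = ∫ y, (∫ x', q x' y ∂sigma2) * pk δ x y ∂sigma2 := by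
      intro x
      simp only [a]
      rw [integral_integral_swap]
      · congr 1; ext y; rw [integral_mul_const]
      · apply integrable_of_cont2
        exact hq.mul (cont_comp2 (continuous_pk hδ) continuous_const continuous_snd)
    simp only [s1]
    have hQ : Continuous fun y => ∫ x', q x' y ∂sigma2 :=
      cont_int (K := fun y x' => q x' y) (cont_comp2 hq continuous_snd continuous_fst)
    rw [integral_integral_swap]
    · congr 1; ext y
      rw [integral_const_mul]
      have : ∫ x, pk δ x y ∂sigma2 = 1 := by
        simp only [pk_comm δ _ y]; exact integral_pk hδ y
      rw [this, mul_one]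
    · apply integrable_of_cont2
      exact (hQ.comp continuous_snd).mul (continuous_pk hδ)
  have hiη : Integrable (fun p : S2 × S2 => |hk η p.1 p.2 - hk 0 p.1 p.2|) PP :=
    ((integrable_of_cont2 (continuous_hk hη)).sub integrable_hk0).abs
  have hiδ : Integrable (fun p : S2 × S2 => |hk δ p.1 p.2 - hk 0 p.1 p.2|) PP :=
    ((integrable_of_cont2 (continuous_hk hδ)).sub integrable_hk0).abs
  have hqi : ∫ p, q p.1 p.2 ∂PP ≤ eps1 δ + eps1 η := by
    unfold eps1
    rw [← integral_add hiδ hiη]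
    apply integral_mono (integrable_of_cont2 hq) (hiδ.add hiη)
    intro p
    have := abs_sub_le (hk δ p.1 p.2) (hk 0 p.1 p.2) (hk η p.1 p.2)
    rw [abs_sub_comm (hk 0 p.1 p.2)] at this
    exact this
  have hm : ∫ p, |kd δ p.1 p.2 - hk 0 p.1 p.2| ∂PP ≤
      ∫ p, (a p.1 p.2 + (Real.sqrt 2 / η) * ρ + |hk η p.1 p.2 - hk 0 p.1 p.2|) ∂PP := by
    refine integral_mono ((integrable_of_cont2 (cont_kd hδ)).sub integrable_hk0).abs ?_ (fun p => hpt p.1 p.2)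
    exact ((integrable_of_cont2 ha).add (integrable_const _)).add hiη
  have he : ∫ p, (a p.1 p.2 + (Real.sqrt 2 / η) * ρ + |hk η p.1 p.2 - hk 0 p.1 p.2|) ∂PP
      = ∫ p, q p.1 p.2 ∂PP + (Real.sqrt 2 / η) * ρ + eps1 η := by
    have i1 : Integrable (fun p : S2 × S2 => a p.1 p.2 + (Real.sqrt 2 / η) * ρ) PP :=
      (integrable_of_cont2 ha).add (integrable_const _)
    rw [integral_add i1 hiη, integral_add (integrable_of_cont2 ha) (integrable_const _), hai]
    simp [eps1]
  linarith

lemma tendsto_kd : Tendsto (fun δ => ∫ p, |kd δ p.1 p.2 - hk 0 p.1 p.2| ∂PP)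
    (nhdsWithin 0 (Set.Ioi 0)) (nhds 0) := by
  rw [Metric.tendsto_nhds]
  intro ε hε
  have e1 := tendsto_eps1.eventually_lt_const (show (0:ℝ) < ε / 8 by positivity)
  obtain ⟨η, h1, hη⟩ := (e1.and self_mem_nhdsWithin).exists
  have hη : 0 < η := hη
  have hsq : 0 < Real.sqrt 2 / η := by positivity
  filter_upwards [e1, self_mem_nhdsWithin, rr_small (show 0 < ε / 8 / (Real.sqrt 2 / η) by positivity)]
    with δ h2 hδ h3
  have h4 := kd_L1 hδ hη h3
  rw [mul_div_cancel₀ _ hsq.ne'] at h4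
  rw [Real.dist_eq, sub_zero, abs_of_nonneg (integral_nonneg fun _ => abs_nonneg _)]
  linarith

/-- The quadratic form converges. -/
lemma tendsto_quad {m : S2 → ℝ} (hm : Measurable m) {M : ℝ} (hM : ∀ x, |m x| ≤ M) :
    Tendsto (fun δ => ∫ p, m p.1 * m p.2 * kd δ p.1 p.2 ∂PP)
    (nhdsWithin 0 (Set.Ioi 0)) (nhds (∫ p, m p.1 * m p.2 * hk 0 p.1 p.2 ∂PP)) := by
  have hmm : AEStronglyMeasurable (fun p : S2 × S2 => m p.1 * m p.2) PP :=
    ((hm.comp measurable_fst).mul (hm.comp measurable_snd)).aestronglyMeasurable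
  have hb : ∀ p : S2 × S2, |m p.1 * m p.2| ≤ M * M := fun p => by
    rw [abs_mul]
    exact mul_le_mul (hM _) (hM _) (abs_nonneg _) ((abs_nonneg _).trans (hM p.1))
  have hIntg : ∀ K : S2 × S2 → ℝ, Integrable K PP → Integrable (fun p => m p.1 * m p.2 * K p) PP :=
    fun K hK => hK.bdd_mul hmm (Eventually.of_forall hb)
  rw [tendsto_iff_norm_sub_tendsto_zero]
  have hz : Tendsto (fun δ => (M * M) * ∫ p, |kd δ p.1 p.2 - hk 0 p.1 p.2| ∂PP)
    (nhdsWithin 0 (Set.Ioi 0)) (nhds 0) := by simpa using tendsto_kd.const_mul (M * M)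
  refine squeeze_zero' (Eventually.of_forall fun _ => norm_nonneg _) ?_ hz
  filter_upwards [self_mem_nhdsWithin] with δ hδ
  have hik := integrable_of_cont2 (cont_kd hδ)
  rw [← integral_sub (hIntg _ hik) (hIntg _ integrable_hk0), ← integral_const_mul]
  refine (norm_integral_le_integral_norm _).trans ?_
  refine integral_mono ((hIntg _ hik).sub (hIntg _ integrable_hk0)).norm
    ((hik.sub integrable_hk0).abs.const_mul _) ?_
  intro p
  simp only [← mul_sub, norm_mul, Real.norm_eq_abs]
  rw [← abs_mul]
  exact mul_le_mul_of_nonneg_right (hb p) (abs_nonneg _)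

/-- Superposition of the gradient kernels. -/
def Wk (m : S2 → ℝ) (δ : ℝ) (y : S2) : E3 := ∫ x, m x • Vk δ x y ∂sigma2

lemma Vk_bdd {δ : ℝ} (hδ : 0 < δ) : ∃ C, ∀ x y, ‖Vk δ x y‖ ≤ C := by
  obtain ⟨C, hC⟩ := (isCompact_univ (X := S2 × S2)).exists_bound_of_continuousOn
    (continuous_Vk hδ).continuousOn
  exact ⟨C, fun x y => hC (x, y) (mem_univ _)⟩

lemma integrable_mV {m : S2 → ℝ} (hm : Measurable m) {M : ℝ} (hM : ∀ x, |m x| ≤ M) {δ : ℝ}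
    (hδ : 0 < δ) (y : S2) : Integrable (fun x => m x • Vk δ x y) sigma2 := by
  obtain ⟨C, hC⟩ := Vk_bdd hδ
  refine Integrable.of_bound (hm.aestronglyMeasurable.smul
    (cont_left (continuous_Vk hδ) y).aestronglyMeasurable) (M * C) (Eventually.of_forall fun x => ?_)
  rw [norm_smul]
  exact mul_le_mul (hM x) (hC x y) (norm_nonneg _) ((abs_nonneg _).trans (hM x))

lemma continuous_Wk {m : S2 → ℝ} (hm : Measurable m) {M : ℝ} (hM : ∀ x, |m x| ≤ M) {δ : ℝ}
    (hδ : 0 < δ) : Continuous (Wk m δ) := by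
  obtain ⟨C, hC⟩ := Vk_bdd hδ
  unfold Wk
  refine continuous_of_dominated (bound := fun _ => M * C)
    (fun y => (integrable_mV hm hM hδ y).aestronglyMeasurable) (fun y => Eventually.of_forall fun x => ?_)
    (integrable_const _) (Eventually.of_forall fun x => ?_)
  · rw [norm_smul]
    exact mul_le_mul (hM x) (hC x y) (norm_nonneg _) ((abs_nonneg _).trans (hM x))
  · exact (cont_right (continuous_Vk hδ) x).const_smul (m x)

lemma sq_integral_le {g : S2 → ℝ} (hg : Continuous g) :
    (∫ y, g y ∂sigma2) ^ 2 ≤ ∫ y, g y ^ 2 ∂sigma2 := by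
  set a := ∫ y, g y ∂sigma2 with ha
  have h : 0 ≤ ∫ y, (g y - a) ^ 2 ∂sigma2 := integral_nonneg fun y => sq_nonneg _
  have e : ∫ y, (g y - a) ^ 2 ∂sigma2 = ∫ y, g y ^ 2 ∂sigma2 - a ^ 2 := by
    have : ∀ y, (g y - a) ^ 2 = g y ^ 2 - (2 * a * g y - a ^ 2) := fun y => by ring
    simp only [this]
    rw [integral_sub (integrable_of_cont (by fun_prop)) (integrable_of_cont (by fun_prop)),
      integral_sub (integrable_of_cont (by fun_prop)) (integrable_of_cont (by fun_prop)),
      integral_const_mul, ← ha]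
    simp
    ring
  linarith

lemma integral_W_sq {m : S2 → ℝ} (hm : Measurable m) {M : ℝ} (hM : ∀ x, |m x| ≤ M)
    (h0 : ∫ x, m x ∂sigma2 = 0) {δ : ℝ} (hδ : 0 < δ) :
    ∫ y, ‖Wk m δ y‖ ^ 2 ∂sigma2 = ∫ p, m p.1 * m p.2 * kd δ p.1 p.2 ∂PP := by
  have hmm : Measurable (fun p : S2 × S2 => m p.1 * m p.2) :=
    (hm.comp measurable_fst).mul (hm.comp measurable_snd)
  have hb : ∀ p : S2 × S2, |m p.1 * m p.2| ≤ M * M := fun p => by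
    rw [abs_mul]
    exact mul_le_mul (hM _) (hM _) (abs_nonneg _) ((abs_nonneg _).trans (hM p.1))
  have hIntg : ∀ K : S2 × S2 → ℝ, Continuous K → Integrable (fun p => m p.1 * m p.2 * K p) PP :=
    fun K hK => (integrable_of_cont2 hK).bdd_mul hmm.aestronglyMeasurable (Eventually.of_forall hb)
  have hK : Continuous fun q : (S2 × S2) × S2 => ⟪Vk δ q.1.1 q.2, Vk δ q.1.2 q.2⟫_ℝ :=
    (cont_comp2 (continuous_Vk hδ) continuous_fst.fst continuous_snd).inner
      (cont_comp2 (continuous_Vk hδ) continuous_fst.snd continuous_snd)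
  have hKy : ∀ y, Continuous fun p : S2 × S2 => ⟪Vk δ p.1 y, Vk δ p.2 y⟫_ℝ := fun y =>
    (cont_comp2 (continuous_Vk hδ) continuous_fst continuous_const).inner
      (cont_comp2 (continuous_Vk hδ) continuous_snd continuous_const)
  have s1 : ∀ y, ‖Wk m δ y‖ ^ 2 = ∫ p, m p.1 * m p.2 * ⟪Vk δ p.1 y, Vk δ p.2 y⟫_ℝ ∂PP := by
    intro y
    have hi := integrable_mV hm hM hδ y
    rw [PP, integral_prod _ (hIntg _ (hKy y)), ← real_inner_self_eq_norm_sq]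
    have hw : ∀ v : E3, ⟪v, Wk m δ y⟫_ℝ = ∫ x, ⟪v, m x • Vk δ x y⟫_ℝ ∂sigma2 := fun v =>
      (integral_inner hi v).symm
    rw [hw]
    congr 1; ext x
    rw [inner_smul_right, real_inner_comm, hw, ← integral_const_mul]
    congr 1; ext x'
    simp only [inner_smul_right]
    ring
  simp only [s1]
  have hIntT : Integrable (fun q : (S2 × S2) × S2 => m q.1.1 * m q.1.2 *
      ⟪Vk δ q.1.1 q.2, Vk δ q.1.2 q.2⟫_ℝ) (PP.prod sigma2) := by
    refine Integrable.bdd_mul (c := M * M) ?_ (hmm.comp measurable_fst).aestronglyMeasurable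
      (Eventually.of_forall fun q => hb q.1)
    exact hK.integrable_of_hasCompactSupport (HasCompactSupport.of_compactSpace _)
  rw [← integral_integral_swap (f := fun (p : S2 × S2) y => m p.1 * m p.2 *
      ⟪Vk δ p.1 y, Vk δ p.2 y⟫_ℝ) hIntT]
  have hH : Continuous fun x' => ∫ y, hk δ x' y ∂sigma2 := cont_int (continuous_hk hδ)
  have s2 : ∀ p : S2 × S2, ∫ y, m p.1 * m p.2 * ⟪Vk δ p.1 y, Vk δ p.2 y⟫_ℝ ∂sigma2 =
      m p.1 * m p.2 * kd δ p.1 p.2 - m p.1 * (m p.2 * ∫ y, hk δ p.2 y ∂sigma2) := by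
    intro p
    have hp := cont_right (continuous_pk hδ) p.1
    have hh := cont_right (continuous_hk hδ) p.2
    rw [integral_const_mul, integral_VV hδ]
    simp only [mul_sub, mul_one]
    rw [integral_sub (integrable_of_cont (by fun_prop)) (integrable_of_cont (by fun_prop)), kd]
    ring
  simp only [s2]
  have h2 := hIntg _ (hH.comp continuous_snd)
  simp only [mul_assoc, Function.comp_def] at h2
  have h1 := hIntg _ (cont_kd hδ)
  rw [integral_sub h1 h2, PP,
    integral_prod_mul m (fun x => m x * ∫ y, hk δ x y ∂sigma2), h0, zero_mul, sub_zero]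

lemma cs_bound {m : S2 → ℝ} (hm : Measurable m) {M : ℝ} (hM : ∀ x, |m x| ≤ M)
    (h0 : ∫ x, m x ∂sigma2 = 0) {δ : ℝ} (hδ : 0 < δ) (F : E3 → ℝ) (F' : E3 → E3 →L[ℝ] ℝ)
    (hd : ∀ y : S2, HasFDerivAt F (F' y) y) (hc : Continuous fun y : S2 => F' y) {L : ℝ}
    (hL : ∀ y : S2, ‖F' y‖ ≤ L) :
    (∫ x, m x * ∫ y : S2, F y * pk δ x y ∂sigma2 ∂sigma2) ^ 2 ≤
      L ^ 2 * ∫ p, m p.1 * m p.2 * kd δ p.1 p.2 ∂PP := by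
  have hFc : Continuous fun y : S2 => F y := by
    rw [continuous_iff_continuousAt]
    intro y
    exact ContinuousAt.comp (f := fun y : S2 => (y:E3)) (hd y).continuousAt continuous_subtype_val.continuousAt
  have hWc := continuous_Wk hm hM hδ
  have hVp := continuous_Vk hδ
  have e1 : ∫ x, m x * ∫ y : S2, F y * pk δ x y ∂sigma2 ∂sigma2 = ∫ y : S2, F' y (Wk m δ y) ∂sigma2 := by
    have t1 : ∀ y : S2, F' y (Wk m δ y) = ∫ x, m x * F' y (Vk δ x y) ∂sigma2 := by
      intro y
      rw [Wk, ← ContinuousLinearMap.integral_comp_comm _ (integrable_mV hm hM hδ y)]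
      simp
    have hcK : Continuous fun p : S2 × S2 => F' p.2 (Vk δ p.1 p.2) :=
      (hc.comp continuous_snd).clm_apply hVp
    simp only [t1]
    rw [← integral_integral_swap (f := fun (x y : S2) => m x * F' y (Vk δ x y))]
    · have t2 : ∀ x, ∫ y : S2, m x * F' y (Vk δ x y) ∂sigma2 =
          m x * (∫ y : S2, F y * pk δ x y ∂sigma2) - m x * ∫ y : S2, F y ∂sigma2 := by
        intro x
        have hp := cont_right (continuous_pk hδ) x
        rw [integral_const_mul, green_pk hδ x F F' hd hc]
        simp only [mul_sub, mul_one]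
        have hFp : Continuous fun y : S2 => F y * pk δ x y := hFc.mul hp
        rw [integral_sub (integrable_of_cont hFp) (integrable_of_cont hFc)]
        ring
      simp only [t2]
      have hA : Continuous fun x => ∫ y : S2, F y * pk δ x y ∂sigma2 :=
        cont_int (K := fun x y => F y * pk δ x y) ((hFc.comp continuous_snd).mul (continuous_pk hδ))
      have hmi : Integrable m sigma2 := Integrable.of_bound hm.aestronglyMeasurable M (Eventually.of_forall hM)
      rw [integral_sub _ (hmi.mul_const _), integral_mul_const, h0, zero_mul, sub_zero]
      exact (integrable_of_cont hA).bdd_mul hm.aestronglyMeasurable (Eventually.of_forall hM)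
    · exact (integrable_of_cont2 hcK).bdd_mul (hm.comp measurable_fst).aestronglyMeasurable
        (Eventually.of_forall fun p => hM p.1)
  rw [e1, ← integral_W_sq hm hM h0 hδ]
  have hi : Continuous fun y : S2 => F' y (Wk m δ y) := hc.clm_apply hWc
  refine (sq_integral_le hi).trans ?_
  rw [← integral_const_mul]
  refine integral_mono (integrable_of_cont (hi.pow 2)) (integrable_of_cont (by fun_prop)) fun y => ?_
  have : ‖F' y (Wk m δ y)‖ ≤ L * ‖Wk m δ y‖ :=
    ((F' y).le_opNorm _).trans (mul_le_mul_of_nonneg_right (hL y) (norm_nonneg _))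
  calc (F' y (Wk m δ y)) ^ 2 = ‖F' y (Wk m δ y)‖ ^ 2 := by rw [Real.norm_eq_abs, sq_abs]
    _ ≤ (L * ‖Wk m δ y‖) ^ 2 := by gcongr
    _ = _ := by ring

lemma dg_bounds (x y : S2) : dg x y ≤ 2 * ‖(x:E3) - y‖ ∧
    dg x y ≤ ‖(x:E3) - y‖ * (1 + ‖(x:E3) - y‖ ^ 2) := by
  set d := ‖(x:E3) - y‖ with hd
  set θ := dg x y with hθ
  have h0 : 0 ≤ θ := Real.arccos_nonneg _
  have hpi : θ ≤ π := Real.arccos_le_pi _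
  have hcos : Real.cos θ = tt x y := Real.cos_arccos (le_tt x y) (tt_le x y)
  have hd0 : 0 ≤ d := norm_nonneg _
  have hs0 : 0 ≤ Real.sin (θ / 2) := Real.sin_nonneg_of_nonneg_of_le_pi (by linarith) (by linarith)
  have hsq : d ^ 2 = (2 * Real.sin (θ / 2)) ^ 2 := by
    have h1 : d ^ 2 = 2 - 2 * tt x y := by
      rw [hd, @norm_sub_sq_real]; simp [tt]; ring
    have h2 := Real.cos_sq' (θ / 2)
    have h3 := Real.cos_two_mul (θ / 2)
    rw [mul_div_cancel₀ _ two_ne_zero] at h3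
    rw [h1, ← hcos]; nlinarith
  have hds : d = 2 * Real.sin (θ / 2) := by
    rw [← Real.sqrt_sq hd0, hsq, Real.sqrt_sq (by positivity)]
  have h1 := Real.mul_le_sin (x := θ / 2) (by linarith) (by linarith)
  have hA : θ ≤ 2 * d := by
    have h2 : 1 / 2 ≤ 2 / π := by
      rw [div_le_div_iff₀ two_pos Real.pi_pos]; linarith [Real.pi_le_four]
    have h3 : 1 / 2 * (θ / 2) ≤ 2 / π * (θ / 2) := mul_le_mul_of_nonneg_right h2 (by linarith)
    linarith
  refine ⟨hA, ?_⟩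
  rcases h0.eq_or_lt with h | h
  · rw [← h]; positivity
  · have h2 := Real.sin_gt_sub_cube (x := θ / 2) (by linarith)
    have h3 : θ ^ 3 ≤ (2 * d) ^ 3 := by gcongr
    nlinarith [pow_nonneg hd0 3]

/-- Radial projection to the unit sphere. -/
def nrm (u : E3) : E3 := ‖u‖⁻¹ • u

lemma norm_nrm {u : E3} (hu : 0 < ‖u‖) : ‖nrm u‖ = 1 := by
  rw [nrm, norm_smul, norm_inv, norm_norm, inv_mul_cancel₀ hu.ne']

lemma nrm_sub_le {u w : E3} {a : ℝ} (ha : 0 < a) (hu : a ≤ ‖u‖) (hw : a ≤ ‖w‖) :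
    ‖nrm u - nrm w‖ ≤ ‖u - w‖ / a := by
  have pu : 0 < ‖u‖ := ha.trans_le hu
  have pw : 0 < ‖w‖ := ha.trans_le hw
  rw [le_div_iff₀ ha]
  apply le_of_sq_le_sq _ (norm_nonneg _)
  have e : ‖nrm u - nrm w‖ ^ 2 * (‖u‖ * ‖w‖) = 2 * (‖u‖ * ‖w‖) - 2 * ⟪u, w⟫_ℝ := by
    rw [@norm_sub_sq_real, norm_nrm pu, norm_nrm pw, nrm, nrm, inner_smul_left, inner_smul_right]
    simp
    field_simp
    ring
  have h2 := @norm_sub_sq_real E3 _ _ u w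
  have h3 : a * a ≤ ‖u‖ * ‖w‖ := mul_le_mul hu hw ha.le pu.le
  have h4 : ‖nrm u - nrm w‖ ^ 2 * (a * a) ≤ ‖nrm u - nrm w‖ ^ 2 * (‖u‖ * ‖w‖) := by gcongr
  nlinarith [sq_nonneg (‖u‖ - ‖w‖)]

lemma measurable_nrm : Measurable nrm := by
  unfold nrm
  exact measurable_norm.inv.smul measurable_id

lemma continuous_of_dg {f : S2 → ℝ} (hf : ∀ x y : S2, |f x - f y| ≤ dg x y) : Continuous f := by
  have : LipschitzWith 2 f := LipschitzWith.of_dist_le_mul fun x y => by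
    rw [Real.dist_eq, Subtype.dist_eq, dist_eq_norm]
    exact (hf x y).trans (dg_bounds x y).1
  exact this.continuous

lemma exists_radius {ε : ℝ} (hε : 0 < ε) : ∃ r : ℝ, 0 < r ∧ r < 1 / 2 ∧
    1 / (1 - r) * (1 + (r / (1 - r)) ^ 2) ≤ 1 + ε ∧ (1 + ε) * r ≤ ε := by
  have h1 : Tendsto (fun r : ℝ => 1 / (1 - r) * (1 + (r / (1 - r)) ^ 2))
      (nhdsWithin 0 (Set.Ioi 0)) (nhds 1) := by
    have : ContinuousAt (fun r : ℝ => 1 / (1 - r) * (1 + (r / (1 - r)) ^ 2)) 0 := by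
      have : (1:ℝ) - 0 ≠ 0 := by norm_num
      fun_prop (disch := assumption)
    have h2 := this.tendsto.mono_left (nhdsWithin_le_nhds (s := Set.Ioi 0))
    simpa using h2
  have h2 : Tendsto (fun r : ℝ => (1 + ε) * r) (nhdsWithin 0 (Set.Ioi 0)) (nhds 0) := by
    have : ContinuousAt (fun r : ℝ => (1 + ε) * r) 0 := by fun_prop
    have h2 := this.tendsto.mono_left (nhdsWithin_le_nhds (s := Set.Ioi 0))
    simpa using h2
  have h3 : Tendsto (fun r : ℝ => r) (nhdsWithin 0 (Set.Ioi 0)) (nhds 0) := nhdsWithin_le_nhds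
  obtain ⟨r, ⟨⟨a, b⟩, c⟩, d⟩ := ((((h1.eventually_lt_const (show (1:ℝ) < 1 + ε by linarith)).and
    (h2.eventually_lt_const hε)).and (h3.eventually_lt_const (show (0:ℝ) < 1 / 2 by norm_num))).and
    self_mem_nhdsWithin).exists
  exact ⟨r, d, c, a.le, b.le⟩

open scoped Convolution in
lemma smooth_approx {f : S2 → ℝ} (hf : ∀ x y : S2, |f x - f y| ≤ dg x y) {ε : ℝ} (hε : 0 < ε) :
    ∃ F : E3 → ℝ, ContDiff ℝ 1 F ∧ (∀ y : S2, |F y - f y| ≤ ε) ∧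
      ∀ y : S2, ‖fderiv ℝ F y‖ ≤ 1 + ε := by
  obtain ⟨r, hr0, hr2, hr1, hrε⟩ := exists_radius hε
  have hfc := continuous_of_dg hf
  obtain ⟨g, hg⟩ := ContinuousMap.exists_extension'
    (Metric.isClosed_sphere (x := (0:E3)) (ε := 1)).isClosedEmbedding_subtypeVal (⟨f, hfc⟩ : C(S2, ℝ))
  have hg : ∀ y : S2, g y = f y := fun y => congrFun hg y
  let h : E3 → ℝ := fun u => g (nrm u)
  have hhm : Measurable h := g.continuous.measurable.comp measurable_nrm
  have hhS : ∀ y : S2, h y = f y := fun y => by simp [h, nrm, hg]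
  obtain ⟨B, hB⟩ := (isCompact_closedBall (0:E3) 1).exists_bound_of_continuousOn g.continuous.continuousOn
  have hhB : ∀ u, ‖h u‖ ≤ B := fun u => by
    apply hB
    rw [mem_closedBall_zero_iff, nrm, norm_smul, norm_inv, norm_norm]
    exact inv_mul_le_one
  have hloc : ∀ u w : E3, 1 - r ≤ ‖u‖ → 1 - r ≤ ‖w‖ → ‖u - w‖ ≤ r →
      |h u - h w| ≤ (1 + ε) * ‖u - w‖ := by
    intro u w hu hw huw
    have ha : 0 < 1 - r := by linarith
    have hD := nrm_sub_le ha hu hw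
    let X : S2 := ⟨nrm u, by simpa using norm_nrm (ha.trans_le hu)⟩
    let Y : S2 := ⟨nrm w, by simpa using norm_nrm (ha.trans_le hw)⟩
    have e1 : h u = f X := hg X
    have e2 : h w = f Y := hg Y
    have hXY := (hf X Y).trans (dg_bounds X Y).2
    rw [e1, e2]
    refine hXY.trans ?_
    change ‖nrm u - nrm w‖ * (1 + ‖nrm u - nrm w‖ ^ 2) ≤ _
    have hD2 : ‖nrm u - nrm w‖ ≤ r / (1 - r) := hD.trans (by gcongr)
    calc ‖nrm u - nrm w‖ * (1 + ‖nrm u - nrm w‖ ^ 2)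
        ≤ (‖u - w‖ / (1 - r)) * (1 + (r / (1 - r)) ^ 2) := by gcongr
      _ = (1 / (1 - r) * (1 + (r / (1 - r)) ^ 2)) * ‖u - w‖ := by ring
      _ ≤ _ := by gcongr
  let φ : ContDiffBump (0:E3) := ⟨r / 4, r / 2, by positivity, by linarith⟩
  have hφr : φ.rOut = r / 2 := rfl
  have hli : LocallyIntegrable h volume := by
    refine (locallyIntegrable_const B).mono hhm.aestronglyMeasurable (Eventually.of_forall fun u => ?_)
    exact (hhB u).trans (le_abs_self B)
  let F : E3 → ℝ := φ.normed volume ⋆[ContinuousLinearMap.lsmul ℝ ℝ, volume] h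
  have hnS : ∀ y : S2, ‖(y:E3)‖ = 1 := fun y => by simp
  refine ⟨F, ?_, ?_, ?_⟩
  · exact φ.hasCompactSupport_normed.contDiff_convolution_left _ φ.contDiff_normed hli
  · intro y
    rw [← hhS y, ← Real.dist_eq]
    refine φ.dist_normed_convolution_le hhm.aestronglyMeasurable fun u hu => ?_
    rw [hφr, mem_ball_iff_norm] at hu
    rw [Real.dist_eq]
    have h1 : 1 - r ≤ ‖u‖ := by
      have := norm_sub_norm_le (y:E3) u
      rw [hnS, norm_sub_rev] at this; linarith
    refine (hloc u y h1 (by rw [hnS]; linarith) (by linarith)).trans ?_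
    refine le_trans ?_ hrε
    gcongr; linarith
  · intro y
    refine norm_fderiv_le_of_lip' ℝ (by positivity) ?_
    filter_upwards [Metric.ball_mem_nhds (y:E3) (show 0 < r / 2 by positivity)] with x hx
    rw [mem_ball_iff_norm] at hx
    have hIntg : ∀ x, Integrable (fun t => φ.normed volume t * h (x - t)) volume := fun x => by
      refine φ.integrable_normed.mul_bdd (c := B) ?_ (Eventually.of_forall fun t => hhB _)
      exact (hhm.comp (measurable_const.sub measurable_id)).aestronglyMeasurable
    have hFe : ∀ x, F x = ∫ t, φ.normed volume t * h (x - t) := fun x => by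
      simp only [F, convolution_def, ContinuousLinearMap.lsmul_apply, smul_eq_mul]
    rw [hFe, hFe, ← integral_sub (hIntg x) (hIntg y)]
    have hc : (1 + ε) * ‖x - y‖ = ∫ t, φ.normed volume t * ((1 + ε) * ‖x - y‖) := by
      rw [integral_mul_const, φ.integral_normed, one_mul]
    rw [hc]
    refine norm_integral_le_of_norm_le (φ.integrable_normed.mul_const _) (Eventually.of_forall fun t => ?_)
    rw [← mul_sub, norm_mul, Real.norm_of_nonneg (φ.nonneg_normed t)]
    by_cases ht : ‖t‖ < r / 2
    · refine mul_le_mul_of_nonneg_left ?_ (φ.nonneg_normed t)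
      have e : x - t - ((y:E3) - t) = x - y := by abel
      have h1 : 1 - r ≤ ‖(y:E3) - t‖ := by
        have := norm_sub_norm_le (y:E3) t
        rw [hnS] at this; linarith
      have h2 : 1 - r ≤ ‖x - t‖ := by
        have a1 := norm_sub_norm_le x t
        have a2 := norm_sub_norm_le (y:E3) x
        rw [hnS, norm_sub_rev] at a2; linarith
      have := hloc (x - t) ((y:E3) - t) h2 h1 (by rw [e]; linarith)
      rwa [e] at this
    · have : φ.normed volume t = 0 := by
        by_contra hne
        have : t ∈ Function.support (φ.normed volume) := hne
        rw [φ.support_normed_eq, hφr, mem_ball_zero_iff] at this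
        exact ht this
      simp [this]

/-- Smoothed pairing. -/
def Af (m f : S2 → ℝ) (δ : ℝ) : ℝ := ∫ x, m x * ∫ y : S2, f y * pk δ x y ∂sigma2 ∂sigma2

lemma cont_inner_pk {f : S2 → ℝ} (hf : Continuous f) {δ : ℝ} (hδ : 0 < δ) :
    Continuous fun x => ∫ y : S2, f y * pk δ x y ∂sigma2 :=
  cont_int (K := fun x y => f y * pk δ x y) ((hf.comp continuous_snd).mul (continuous_pk hδ))

lemma M_nonneg {m : S2 → ℝ} {M : ℝ} (hM : ∀ x, |m x| ≤ M) : 0 ≤ M := by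
  obtain ⟨x⟩ : Nonempty S2 := nonempty_of_isProbabilityMeasure sigma2
  exact (abs_nonneg _).trans (hM x)

lemma pair_close {m : S2 → ℝ} (hm : Measurable m) {M : ℝ} (hM : ∀ x, |m x| ≤ M)
    {a b : S2 → ℝ} (ha : Continuous a) (hb : Continuous b) {ε : ℝ} (h : ∀ x, |a x - b x| ≤ ε) :
    |∫ x, m x * a x ∂sigma2 - ∫ x, m x * b x ∂sigma2| ≤ M * ε := by
  have hi : ∀ k : S2 → ℝ, Continuous k → Integrable (fun x => m x * k x) sigma2 := fun k hk =>
    (integrable_of_cont hk).bdd_mul hm.aestronglyMeasurable (Eventually.of_forall hM)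
  rw [← integral_sub (hi _ ha) (hi _ hb)]
  have := norm_integral_le_of_norm_le_const (μ := sigma2) (C := M * ε)
    (f := fun x => m x * a x - m x * b x) (Eventually.of_forall fun x => by
      rw [← mul_sub, norm_mul]
      exact mul_le_mul (hM x) (h x) (norm_nonneg _) (M_nonneg hM))
  simpa using this

lemma pk_close {a b : S2 → ℝ} (ha : Continuous a) (hb : Continuous b) {ε : ℝ}
    (h : ∀ x, |a x - b x| ≤ ε) {δ : ℝ} (hδ : 0 < δ) (x : S2) :
    |∫ y : S2, a y * pk δ x y ∂sigma2 - ∫ y : S2, b y * pk δ x y ∂sigma2| ≤ ε := by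
  have hp := cont_right (continuous_pk hδ) x
  have ia : Continuous fun y => a y * pk δ x y := ha.mul hp
  have ib : Continuous fun y => b y * pk δ x y := hb.mul hp
  rw [← integral_sub (integrable_of_cont ia) (integrable_of_cont ib)]
  have e : ε = ∫ y, ε * pk δ x y ∂sigma2 := by rw [integral_const_mul, integral_pk hδ, mul_one]
  rw [e, ← Real.norm_eq_abs]
  refine norm_integral_le_of_norm_le (integrable_of_cont (by fun_prop)) (Eventually.of_forall fun y => ?_)
  rw [← sub_mul, norm_mul, Real.norm_of_nonneg (pk_nonneg hδ x y)]
  exact mul_le_mul_of_nonneg_right (h y) (pk_nonneg hδ x y)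

lemma Af_sq_le {m : S2 → ℝ} (hm : Measurable m) {M : ℝ} (hM : ∀ x, |m x| ≤ M)
    (h0 : ∫ x, m x ∂sigma2 = 0) {f : S2 → ℝ} (hf : ∀ x y : S2, |f x - f y| ≤ dg x y)
    {δ : ℝ} (hδ : 0 < δ) :
    (Af m f δ) ^ 2 ≤ ∫ p, m p.1 * m p.2 * kd δ p.1 p.2 ∂PP := by
  set B := ∫ p, m p.1 * m p.2 * kd δ p.1 p.2 ∂PP with hB
  have hB0 : 0 ≤ B := by
    rw [hB, ← integral_W_sq hm hM h0 hδ]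
    exact integral_nonneg fun y => sq_nonneg _
  have hfc := continuous_of_dg hf
  have hM0 := M_nonneg hM
  have key : ∀ ε : ℝ, 0 < ε → |Af m f δ| ≤ Real.sqrt B + ε * (Real.sqrt B + M) := by
    intro ε hε
    obtain ⟨F, hF, hFf, hFL⟩ := smooth_approx hf hε
    have hFc : Continuous fun y : S2 => F y := hF.continuous.comp continuous_subtype_val
    have h1 := cs_bound hm hM h0 hδ F (fderiv ℝ F)
      (fun y => (hF.differentiable one_ne_zero y).hasFDerivAt)
      ((hF.continuous_fderiv one_ne_zero).comp continuous_subtype_val) hFL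
    have h2 : |Af m (fun y => F y) δ| ≤ (1 + ε) * Real.sqrt B := by
      apply abs_le_of_sq_le_sq _ (by positivity)
      rw [mul_pow, Real.sq_sqrt hB0]
      exact h1
    have h3 : |Af m f δ - Af m (fun y => F y) δ| ≤ M * ε := by
      refine pair_close hm hM (cont_inner_pk hfc hδ) (cont_inner_pk hFc hδ) fun x => ?_
      refine pk_close hfc hFc (fun y => ?_) hδ x
      rw [abs_sub_comm]; exact hFf y
    have h4 := abs_add_le (Af m f δ - Af m (fun y => F y) δ) (Af m (fun y => F y) δ)
    rw [sub_add_cancel] at h4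
    nlinarith
  have : |Af m f δ| ≤ Real.sqrt B := by
    refine le_of_forall_pos_le_add fun η hη => ?_
    have hs : 0 < Real.sqrt B + M + 1 := by positivity
    refine (key (η / (Real.sqrt B + M + 1)) (by positivity)).trans ?_
    gcongr
    rw [div_mul_eq_mul_div, div_le_iff₀ hs]
    nlinarith
  calc (Af m f δ) ^ 2 = |Af m f δ| ^ 2 := (sq_abs _).symm
    _ ≤ Real.sqrt B ^ 2 := by gcongr
    _ = B := Real.sq_sqrt hB0

lemma tendsto_Af {m : S2 → ℝ} (hm : Measurable m) {M : ℝ} (hM : ∀ x, |m x| ≤ M)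
    {f : S2 → ℝ} (hf : ∀ x y : S2, |f x - f y| ≤ dg x y) :
    Tendsto (Af m f) (nhdsWithin 0 (Set.Ioi 0)) (nhds (∫ x, m x * f x ∂sigma2)) := by
  have hfc := continuous_of_dg hf
  have hM0 := M_nonneg hM
  rw [Metric.tendsto_nhds]
  intro ε hε
  let C := 2 * Real.sqrt 2
  have hC : ∀ x y : S2, |f y - f x| ≤ C * Real.sqrt (1 - tt x y) := fun x y => by
    refine (hf y x).trans ((dg_bounds y x).1.trans (le_of_eq ?_))
    rw [norm_sub_eq, tt_comm]; simp only [C]; ring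
  have hC0 : 0 < C := by positivity
  let ρ := ε / (2 * C * (M + 1))
  have hρ : 0 < ρ := by positivity
  filter_upwards [rr_small hρ, self_mem_nhdsWithin] with δ h1 hδ
  have hδ : 0 < δ := hδ
  have h2 : |Af m f δ - ∫ x, m x * f x ∂sigma2| ≤ M * (C * ρ) :=
    pair_close hm hM (cont_inner_pk hfc hδ) hfc fun x =>
      (conc hδ hfc x (hC x)).trans (mul_le_mul_of_nonneg_left (h1 x) hC0.le)
  rw [Real.dist_eq]
  refine h2.trans_lt ?_
  have e : (M + 1) * (C * ρ) = ε / 2 := by simp only [ρ]; field_simp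
  have : 0 < C * ρ := by positivity
  nlinarith

/-- The main inequality for bounded densities of zero mean. -/
lemma main_density {m : S2 → ℝ} (hm : Measurable m) {M : ℝ} (hM : ∀ x, |m x| ≤ M)
    (h0 : ∫ x, m x ∂sigma2 = 0) {f : S2 → ℝ} (hf : ∀ x y : S2, |f x - f y| ≤ dg x y) :
    (∫ x, m x * f x ∂sigma2) ^ 2 ≤ ∫ p, m p.1 * m p.2 * hk 0 p.1 p.2 ∂PP := by
  refine le_of_tendsto_of_tendsto ((tendsto_Af hm hM hf).pow 2) (tendsto_quad hm hM) ?_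
  filter_upwards [self_mem_nhdsWithin] with δ hδ
  exact Af_sq_le hm hM h0 hf hδ

lemma density_of_le {P : Measure S2} [IsFiniteMeasure P] {C : NNReal}
    (h : P ≤ (C : ENNReal) • sigma2) :
    ∃ p : S2 → ℝ, Measurable p ∧ (∀ x, |p x| ≤ C) ∧
      ∀ φ : S2 → ℝ, ∫ x, φ x ∂P = ∫ x, p x * φ x ∂sigma2 := by
  have : SigmaFinite sigma2 := IsFiniteMeasure.toSigmaFinite _
  have : P.HaveLebesgueDecomposition sigma2 := Measure.haveLebesgueDecomposition_of_sigmaFinite P sigma2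
  have hac : P ≪ sigma2 :=
    (Measure.absolutelyContinuous_of_le h).trans Measure.smul_absolutelyContinuous
  have hm := Measure.measurable_rnDeriv P sigma2
  have hle : ∀ᵐ x ∂sigma2, P.rnDeriv sigma2 x ≤ C := by
    refine ae_le_of_forall_setLIntegral_le_of_sigmaFinite hm fun s hs _ => ?_
    rw [Measure.setLIntegral_rnDeriv hac, lintegral_const, Measure.restrict_apply_univ]
    exact h s
  refine ⟨fun x => min (P.rnDeriv sigma2 x).toReal C, hm.ennreal_toReal.min measurable_const,
    fun x => ?_, fun φ => ?_⟩
  · change |min (P.rnDeriv sigma2 x).toReal C| ≤ C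
    have hC0 : (0:ℝ) ≤ (C:ℝ) := C.coe_nonneg
    rw [abs_of_nonneg (le_min ENNReal.toReal_nonneg hC0)]
    exact min_le_right _ _
  · rw [← integral_rnDeriv_smul hac]
    refine integral_congr_ae ?_
    filter_upwards [hle] with x hx
    have : (P.rnDeriv sigma2 x).toReal ≤ C := ENNReal.toReal_mono ENNReal.coe_ne_top hx
    rw [min_eq_left this, smul_eq_mul]

lemma G_eq (x y : S2) : G x y = (1 / 2) * hk 0 x y := by
  have h : 2 * (1 + 0 - tt x y) = dist x y ^ 2 := by
    rw [Subtype.dist_eq, dist_eq_norm, norm_sub_eq, mul_pow, Real.sq_sqrt two_pos.le,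
      Real.sq_sqrt (by linarith [tt_le x y])]
    ring
  rw [G, hk, h, one_div, Real.log_inv, Real.log_pow]
  push_cast
  ring

lemma integrable_quad {a b : S2 → ℝ} {A B : ℝ} (ha : Measurable a) (hA : ∀ x, |a x| ≤ A)
    (hb : Measurable b) (hB : ∀ x, |b x| ≤ B) :
    Integrable (fun p : S2 × S2 => b p.1 * a p.2 * hk 0 p.1 p.2) PP := by
  refine integrable_hk0.bdd_mul (c := B * A)
    ((hb.comp measurable_fst).mul (ha.comp measurable_snd)).aestronglyMeasurable
    (Eventually.of_forall fun p => ?_)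
  rw [norm_mul]
  exact mul_le_mul (hB _) (hA _) (norm_nonneg _) (M_nonneg hB)

lemma energy_term {P Q : Measure S2} {a b : S2 → ℝ} {A B : ℝ} (ha : Measurable a) (hA : ∀ x, |a x| ≤ A)
    (hb : Measurable b) (hB : ∀ x, |b x| ≤ B)
    (hP : ∀ φ : S2 → ℝ, ∫ x, φ x ∂P = ∫ x, a x * φ x ∂sigma2)
    (hQ : ∀ φ : S2 → ℝ, ∫ x, φ x ∂Q = ∫ x, b x * φ x ∂sigma2) :
    ∫ x, ∫ y, G x y ∂P ∂Q = (1 / 2) * ∫ p, b p.1 * a p.2 * hk 0 p.1 p.2 ∂PP := by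
  rw [PP, integral_prod _ (integrable_quad ha hA hb hB), hQ, ← integral_const_mul]
  congr 1; ext x
  rw [hP, ← integral_const_mul, ← integral_const_mul]
  congr 1; ext y
  rw [G_eq]; ring

/-- Wasserstein-type bound: for a probability measure `ν` with bounded density w.r.t. `σ`
such that `μ = ν − σ` has finite logarithmic energy, and any 1-Lipschitz (w.r.t. the
geodesic distance) function `f`, one has `(∫ f dν − ∫ f dσ)² ≤ 2·I(μ)`. -/
theorem lipschitz_test_le_energy (ν : Measure S2) [IsProbabilityMeasure ν]
    (hbdd : ∃ C : NNReal, ν ≤ (C : ENNReal) • sigma2)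
    (μ : SignedMeasure S2) (hμ : μ = ν.toSignedMeasure - sigma2.toSignedMeasure)
    (hfin : Integrable (fun p : S2 × S2 => Real.log (1 / dist p.1 p.2))
      (μ.totalVariation.prod μ.totalVariation))
    (f : S2 → ℝ) (hf : ∀ x y : S2, |f x - f y| ≤ dg x y) :
    ((∫ x, f x ∂ν) - ∫ x, f x ∂sigma2) ^ 2 ≤ 2 * signedLogEnergy μ := by
  obtain ⟨C, hC⟩ := hbdd
  have hP : (ν - sigma2) ≤ (C : ENNReal) • sigma2 := Measure.sub_le.trans hC
  have hN : (sigma2 - ν) ≤ ((1 : NNReal) : ENNReal) • sigma2 := by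
    rw [ENNReal.coe_one, one_smul]; exact Measure.sub_le
  obtain ⟨p, hpm, hpb, hp⟩ := density_of_le hP
  obtain ⟨n, hnm, hnb, hn⟩ := density_of_le hN
  have hmeas : (ν - sigma2) + sigma2 = ν + (sigma2 - ν) := by
    have h := Measure.sub_toSignedMeasure_eq_toSignedMeasure_sub (μ := ν) (ν := sigma2)
    have h2 : ((ν - sigma2) + sigma2).toSignedMeasure = (ν + (sigma2 - ν)).toSignedMeasure := by
      rw [Measure.toSignedMeasure_add, Measure.toSignedMeasure_add]
      rw [sub_eq_sub_iff_add_eq_add] at h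
      rw [← h]
    exact Measure.toSignedMeasure_eq_toSignedMeasure_iff.1 h2
  have hdiff : ∀ g : S2 → ℝ, Continuous g →
      (∫ x, g x ∂ν) - ∫ x, g x ∂sigma2 = ∫ x, (p x - n x) * g x ∂sigma2 := by
    intro g hg
    have hi : ∀ (R : Measure S2) [IsFiniteMeasure R], Integrable g R := fun R _ =>
      hg.integrable_of_hasCompactSupport (HasCompactSupport.of_compactSpace _)
    have h1 : ∫ x, g x ∂((ν - sigma2) + sigma2) = ∫ x, g x ∂(ν + (sigma2 - ν)) := by rw [hmeas]
    rw [integral_add_measure (hi _) (hi _), integral_add_measure (hi _) (hi _), hp g, hn g] at h1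
    have i1 : Integrable (fun x => p x * g x) sigma2 :=
      (hi sigma2).bdd_mul hpm.aestronglyMeasurable (Eventually.of_forall hpb)
    have i2 : Integrable (fun x => n x * g x) sigma2 :=
      (hi sigma2).bdd_mul hnm.aestronglyMeasurable (Eventually.of_forall hnb)
    simp only [sub_mul]
    rw [integral_sub i1 i2]
    linarith
  have h0 : ∫ x, (p x - n x) ∂sigma2 = 0 := by
    have := hdiff (fun _ => 1) continuous_const
    simpa using this.symm
  have hM : ∀ x, |p x - n x| ≤ C + (1 : NNReal) := fun x =>
    (abs_sub _ _).trans (add_le_add (hpb x) (hnb x))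
  have hmain := main_density (hpm.sub hnm) hM h0 hf
  rw [hdiff f (continuous_of_dg hf)]
  refine hmain.trans (le_of_eq ?_)
  rw [signedLogEnergy, hμ, Measure.toJordanDecomposition_toSignedMeasure_sub,
    Measure.jordanDecompositionOfToSignedMeasureSub_posPart,
    Measure.jordanDecompositionOfToSignedMeasureSub_negPart,
    energy_term hpm hpb hpm hpb hp hp, energy_term hnm hnb hpm hpb hn hp,
    energy_term hpm hpb hnm hnb hp hn, energy_term hnm hnb hnm hnb hn hn]
  have q1 := integrable_quad hpm hpb hpm hpb
  have q2 := integrable_quad hnm hnb hpm hpb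
  have q3 := integrable_quad hpm hpb hnm hnb
  have q4 := integrable_quad hnm hnb hnm hnb
  have e : ∀ z : S2 × S2, (p z.1 - n z.1) * (p z.2 - n z.2) * hk 0 z.1 z.2 =
      p z.1 * p z.2 * hk 0 z.1 z.2 - p z.1 * n z.2 * hk 0 z.1 z.2
      - (n z.1 * p z.2 * hk 0 z.1 z.2 - n z.1 * n z.2 * hk 0 z.1 z.2) := fun z => by ring
  have e2 : ∫ z, (p z.1 - n z.1) * (p z.2 - n z.2) * hk 0 z.1 z.2 ∂PP =
      (∫ z, p z.1 * p z.2 * hk 0 z.1 z.2 ∂PP - ∫ z, p z.1 * n z.2 * hk 0 z.1 z.2 ∂PP)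
      - (∫ z, n z.1 * p z.2 * hk 0 z.1 z.2 ∂PP - ∫ z, n z.1 * n z.2 * hk 0 z.1 z.2 ∂PP) := by
    simp only [e]
    refine (integral_sub (q1.sub q2) (q3.sub q4)).trans ?_
    congr 1
    · exact integral_sub q1 q2
    · exact integral_sub q3 q4
  simp only [Pi.sub_apply]
  rw [e2]
  ring
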